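/- arXiv:2605.23748 — 8 statements merged into one kernel-verified Lean document; each statement's English description precedes it below -/
import Mathlib

section
/- Let F : ℝ → ℝ be differentiable. Define on the phase space ℝ⁴ the Hamiltonian H(q₁,q₂,p₁,p₂) = p₁² + p₂² + F(q₁p₁ + q₂p₂) and the angular momentum 𝒥(q₁,q₂,p₁,p₂) = q₁p₂ − q₂p₁. Then the canonical Poisson bracket {H, 𝒥} vanishes identically on ℝ⁴; in particular, for every N ≥ 1 and all real parameters γ₁,…,γ_N, the generalized Zernike Hamiltonian H_(N) = p₁² + p₂² + Σ_{n=1}^N γ_n (q₁p₁ + q₂p₂)^n Poisson-commutes with 𝒥. -/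
/-! The angular momentum generates simultaneous rotations of `q` and `p`, under which both
`p₁² + p₂²` and `q₁p₁ + q₂p₂` are invariant. At the level of derivatives, with
`s = q₁p₁ + q₂p₂`, the differentials of `H = p₁² + p₂² + F(s)` and of `𝒥` are computed by the
chain rule, and the bracket cancels identically as a polynomial in `q`, `p` and the derivative of `F` at `s`.
The Zernike Hamiltonians are the case `F(t) = ∑ γₙ tⁿ`. -/

/-- The canonical Poisson bracket on phase space `ℝ⁴` with coordinates
`(q₁, q₂, p₁, p₂)`, using Fréchet derivatives for the partial derivatives. -/
noncomputable def pbracket (f g : ℝ × ℝ × ℝ × ℝ → ℝ) (x : ℝ × ℝ × ℝ × ℝ) : ℝ :=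
  fderiv ℝ f x (1, 0, 0, 0) * fderiv ℝ g x (0, 0, 1, 0)
    - fderiv ℝ f x (0, 0, 1, 0) * fderiv ℝ g x (1, 0, 0, 0)
    + fderiv ℝ f x (0, 1, 0, 0) * fderiv ℝ g x (0, 0, 0, 1)
    - fderiv ℝ f x (0, 0, 0, 1) * fderiv ℝ g x (0, 1, 0, 0)

/-- The angular momentum `𝒥 = q₁ p₂ − q₂ p₁`. -/
noncomputable def angMom : ℝ × ℝ × ℝ × ℝ → ℝ :=
  fun x => x.1 * x.2.2.2 - x.2.1 * x.2.2.1

theorem pbracket_angMom_eq_zero (F : ℝ → ℝ) (hF : Differentiable ℝ F) (x : ℝ × ℝ × ℝ × ℝ) :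
    pbracket
      (fun y => y.2.2.1 ^ 2 + y.2.2.2 ^ 2 + F (y.1 * y.2.2.1 + y.2.1 * y.2.2.2))
      angMom x = 0 := by
  have h1 : HasFDerivAt (fun y : ℝ × ℝ × ℝ × ℝ => y.1)
      (ContinuousLinearMap.fst ℝ ℝ (ℝ × ℝ × ℝ)) x := hasFDerivAt_fst
  have ht : HasFDerivAt (fun y : ℝ × ℝ × ℝ × ℝ => y.2)
      (ContinuousLinearMap.snd ℝ ℝ (ℝ × ℝ × ℝ)) x := hasFDerivAt_snd
  have h2 := ht.fst
  have h3 := ht.snd.fst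
  have h4 := ht.snd.snd
  have hs := (h1.mul h3).add (h2.mul h4)
  have hH : HasFDerivAt (fun y : ℝ × ℝ × ℝ × ℝ =>
      y.2.2.1 ^ 2 + y.2.2.2 ^ 2 + F (y.1 * y.2.2.1 + y.2.1 * y.2.2.2)) _ x :=
    ((h3.pow 2).add (h4.pow 2)).add
      ((hF (x.1 * x.2.2.1 + x.2.1 * x.2.2.2)).hasDerivAt.comp_hasFDerivAt x hs)
  have hJ : HasFDerivAt angMom _ x := (h1.mul h4).sub (h2.mul h3)
  unfold pbracket
  rw [hJ.fderiv, hH.fderiv]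
  simp
  ring

/-- For differentiable `F : ℝ → ℝ`, the Hamiltonian
`H = p₁² + p₂² + F(q₁p₁ + q₂p₂)` Poisson-commutes with the angular momentum
`𝒥 = q₁p₂ − q₂p₁`; in particular every generalized Zernike Hamiltonian
`H_(N) = p₁² + p₂² + ∑_{n=1}^N γₙ (q₁p₁+q₂p₂)ⁿ` Poisson-commutes with `𝒥`. -/
theorem zernike_angularMomentum_poisson_commutes
    (F : ℝ → ℝ) (hF : Differentiable ℝ F) :
    (∀ x : ℝ × ℝ × ℝ × ℝ,
      pbracket
        (fun y => y.2.2.1 ^ 2 + y.2.2.2 ^ 2 + F (y.1 * y.2.2.1 + y.2.1 * y.2.2.2))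
        angMom x = 0) ∧
    (∀ N : ℕ, 1 ≤ N → ∀ γ : ℕ → ℝ, ∀ x : ℝ × ℝ × ℝ × ℝ,
      pbracket
        (fun y => y.2.2.1 ^ 2 + y.2.2.2 ^ 2 +
          ∑ n ∈ Finset.Icc 1 N, γ n * (y.1 * y.2.2.1 + y.2.1 * y.2.2.2) ^ n)
        angMom x = 0) := by
  refine ⟨pbracket_angMom_eq_zero F hF, fun N _ γ x => ?_⟩
  exact pbracket_angMom_eq_zero (fun t => ∑ n ∈ Finset.Icc 1 N, γ n * t ^ n) (by fun_prop) x
end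

section
/- Fix γ₁, γ₂ ∈ ℝ. Define on ℝ⁴ the Zernike Hamiltonian H₂ = p₁² + p₂² + γ₁(q₁p₁ + q₂p₂) + γ₂(q₁p₁ + q₂p₂)² and the functions I₁ = (1 + γ₂(q₁² + q₂²))p₁² + γ₁q₁p₁ and I₂ = (1 + γ₂(q₁² + q₂²))p₂² + γ₁q₂p₂. Then the canonical Poisson brackets {H₂, I₁} and {H₂, I₂} vanish identically on ℝ⁴. -/
/-- The four coordinate functions have their projections as Fréchet derivatives. -/
theorem hasFDerivAt_coords (x : ℝ × ℝ × ℝ × ℝ) :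
    ∃ a b c d : (ℝ × ℝ × ℝ × ℝ) →L[ℝ] ℝ,
      HasFDerivAt (fun y : ℝ × ℝ × ℝ × ℝ => y.1) a x ∧
      HasFDerivAt (fun y : ℝ × ℝ × ℝ × ℝ => y.2.1) b x ∧
      HasFDerivAt (fun y : ℝ × ℝ × ℝ × ℝ => y.2.2.1) c x ∧
      HasFDerivAt (fun y : ℝ × ℝ × ℝ × ℝ => y.2.2.2) d x ∧
      (∀ v, a v = v.1) ∧ (∀ v, b v = v.2.1) ∧ (∀ v, c v = v.2.2.1) ∧ (∀ v, d v = v.2.2.2) :=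
  ⟨_, _, _, _, hasFDerivAt_fst, hasFDerivAt_snd.fst, hasFDerivAt_snd.snd.fst,
    hasFDerivAt_snd.snd.snd, fun _ => rfl, fun _ => rfl, fun _ => rfl, fun _ => rfl⟩

/-- The Zernike Hamiltonian `H₂` Poisson-commutes with the quadratic
integrals `I₁` and `I₂`. -/
theorem zernike_I1_I2_poisson_commute (γ₁ γ₂ : ℝ) :
    (∀ x : ℝ × ℝ × ℝ × ℝ,
      pbracket
        (fun y => y.2.2.1 ^ 2 + y.2.2.2 ^ 2
          + γ₁ * (y.1 * y.2.2.1 + y.2.1 * y.2.2.2)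
          + γ₂ * (y.1 * y.2.2.1 + y.2.1 * y.2.2.2) ^ 2)
        (fun y => (1 + γ₂ * (y.1 ^ 2 + y.2.1 ^ 2)) * y.2.2.1 ^ 2
          + γ₁ * y.1 * y.2.2.1) x = 0) ∧
    (∀ x : ℝ × ℝ × ℝ × ℝ,
      pbracket
        (fun y => y.2.2.1 ^ 2 + y.2.2.2 ^ 2
          + γ₁ * (y.1 * y.2.2.1 + y.2.1 * y.2.2.2)
          + γ₂ * (y.1 * y.2.2.1 + y.2.1 * y.2.2.2) ^ 2)
        (fun y => (1 + γ₂ * (y.1 ^ 2 + y.2.1 ^ 2)) * y.2.2.2 ^ 2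
          + γ₁ * y.2.1 * y.2.2.2) x = 0) := by
  constructor
  · intro x
    obtain ⟨a, b, c, d, ha, hb, hc, hd, ea, eb, ec, ed⟩ := hasFDerivAt_coords x
    have hL := (ha.mul hc).add (hb.mul hd)
    have hH := (((hc.pow 2).add (hd.pow 2)).add (hL.const_mul γ₁)).add ((hL.pow 2).const_mul γ₂)
    have hI := (((((ha.pow 2).add (hb.pow 2)).const_mul γ₂).const_add 1).mul (hc.pow 2)).add
      ((ha.const_mul γ₁).mul hc)
    unfold pbracket
    erw [hH.fderiv, hI.fderiv]
    simp [ea, eb, ec, ed]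
    ring
  · intro x
    obtain ⟨a, b, c, d, ha, hb, hc, hd, ea, eb, ec, ed⟩ := hasFDerivAt_coords x
    have hL := (ha.mul hc).add (hb.mul hd)
    have hH := (((hc.pow 2).add (hd.pow 2)).add (hL.const_mul γ₁)).add ((hL.pow 2).const_mul γ₂)
    have hI := (((((ha.pow 2).add (hb.pow 2)).const_mul γ₂).const_add 1).mul (hd.pow 2)).add
      ((hb.const_mul γ₁).mul hd)
    unfold pbracket
    erw [hH.fderiv, hI.fderiv]
    simp [ea, eb, ec, ed]
    ring
end

section
/- Fix γ₁, γ₂ ∈ ℝ. On ℝ⁴, define H₂ = p₁² + p₂² + γ₁(q₁p₁ + q₂p₂) + γ₂(q₁p₁ + q₂p₂)², I₁ = (1 + γ₂(q₁² + q₂²))p₁² + γ₁q₁p₁, I₂ = (1 + γ₂(q₁² + q₂²))p₂² + γ₁q₂p₂, and set X₁ = (q₁p₂ − q₂p₁)/2, X₂ = (I₁ − I₂)/2, and X₃ = (1 + γ₂(q₁² + q₂²))p₁p₂ + (γ₁/2)(q₁p₂ + q₂p₁). Then the canonical Poisson bracket relations {X₁, X₂} = X₃, {X₃, X₁} = X₂,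 and {X₂, X₃} = −(γ₁² + 2γ₂H₂)X₁ − 8γ₂²X₁³ hold identically on ℝ⁴ (the cubic Higgs-type symmetry algebra of the Zernike system). -/
/-- The cubic Higgs-type symmetry algebra of the Zernike system:
`{X₁,X₂} = X₃`, `{X₃,X₁} = X₂`, `{X₂,X₃} = −(γ₁² + 2γ₂H₂)X₁ − 8γ₂²X₁³`. -/
theorem zernike_cubic_higgs_algebra (γ₁ γ₂ : ℝ) :
    let H₂ : ℝ × ℝ × ℝ × ℝ → ℝ := fun y =>
      y.2.2.1 ^ 2 + y.2.2.2 ^ 2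
        + γ₁ * (y.1 * y.2.2.1 + y.2.1 * y.2.2.2)
        + γ₂ * (y.1 * y.2.2.1 + y.2.1 * y.2.2.2) ^ 2
    let I₁ : ℝ × ℝ × ℝ × ℝ → ℝ := fun y =>
      (1 + γ₂ * (y.1 ^ 2 + y.2.1 ^ 2)) * y.2.2.1 ^ 2 + γ₁ * y.1 * y.2.2.1
    let I₂ : ℝ × ℝ × ℝ × ℝ → ℝ := fun y =>
      (1 + γ₂ * (y.1 ^ 2 + y.2.1 ^ 2)) * y.2.2.2 ^ 2 + γ₁ * y.2.1 * y.2.2.2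
    let X₁ : ℝ × ℝ × ℝ × ℝ → ℝ := fun y =>
      (y.1 * y.2.2.2 - y.2.1 * y.2.2.1) / 2
    let X₂ : ℝ × ℝ × ℝ × ℝ → ℝ := fun y => (I₁ y - I₂ y) / 2
    let X₃ : ℝ × ℝ × ℝ × ℝ → ℝ := fun y =>
      (1 + γ₂ * (y.1 ^ 2 + y.2.1 ^ 2)) * y.2.2.1 * y.2.2.2
        + (γ₁ / 2) * (y.1 * y.2.2.2 + y.2.1 * y.2.2.1)
    (∀ x : ℝ × ℝ × ℝ × ℝ, pbracket X₁ X₂ x = X₃ x) ∧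
    (∀ x : ℝ × ℝ × ℝ × ℝ, pbracket X₃ X₁ x = X₂ x) ∧
    (∀ x : ℝ × ℝ × ℝ × ℝ, pbracket X₂ X₃ x
      = -(γ₁ ^ 2 + 2 * γ₂ * H₂ x) * X₁ x - 8 * γ₂ ^ 2 * (X₁ x) ^ 3) := by
  intro H₂ I₁ I₂ X₁ X₂ X₃
  have hq₁ (x : ℝ × ℝ × ℝ × ℝ) : HasFDerivAt (fun y : ℝ × ℝ × ℝ × ℝ => y.1) _ x :=
    hasFDerivAt_fst (𝕜 := ℝ)
  have hq₂ (x : ℝ × ℝ × ℝ × ℝ) : HasFDerivAt (fun y : ℝ × ℝ × ℝ × ℝ => y.2.1) _ x :=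
    (hasFDerivAt_snd (𝕜 := ℝ)).fst
  have hp (x : ℝ × ℝ × ℝ × ℝ) : HasFDerivAt (fun y : ℝ × ℝ × ℝ × ℝ => y.2.2) _ x :=
    (hasFDerivAt_snd (𝕜 := ℝ)).snd
  have hp₁ (x : ℝ × ℝ × ℝ × ℝ) : HasFDerivAt (fun y : ℝ × ℝ × ℝ × ℝ => y.2.2.1) _ x :=
    (hp x).fst
  have hp₂ (x : ℝ × ℝ × ℝ × ℝ) : HasFDerivAt (fun y : ℝ × ℝ × ℝ × ℝ => y.2.2.2) _ x :=
    (hp x).snd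
  -- `1 + γ₂ (q₁² + q₂²)`, the common conformal factor of `I₁`, `I₂` and `X₃`.
  have hc (x : ℝ × ℝ × ℝ × ℝ) :
      HasFDerivAt (fun y : ℝ × ℝ × ℝ × ℝ => 1 + γ₂ * (y.1 ^ 2 + y.2.1 ^ 2)) _ x :=
    ((((hq₁ x).pow 2).add ((hq₂ x).pow 2)).const_mul γ₂).const_add 1
  have hX₁ (x : ℝ × ℝ × ℝ × ℝ) : HasFDerivAt X₁ _ x :=
    (((hq₁ x).mul (hp₂ x)).sub ((hq₂ x).mul (hp₁ x))).mul_const (2⁻¹ : ℝ)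
  have hI₁ (x : ℝ × ℝ × ℝ × ℝ) : HasFDerivAt I₁ _ x :=
    ((hc x).mul ((hp₁ x).pow 2)).add (((hq₁ x).const_mul γ₁).mul (hp₁ x))
  have hI₂ (x : ℝ × ℝ × ℝ × ℝ) : HasFDerivAt I₂ _ x :=
    ((hc x).mul ((hp₂ x).pow 2)).add (((hq₂ x).const_mul γ₁).mul (hp₂ x))
  have hX₂ (x : ℝ × ℝ × ℝ × ℝ) : HasFDerivAt X₂ _ x :=
    ((hI₁ x).sub (hI₂ x)).mul_const (2⁻¹ : ℝ)
  have hX₃ (x : ℝ × ℝ × ℝ × ℝ) : HasFDerivAt X₃ _ x :=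
    (((hc x).mul (hp₁ x)).mul (hp₂ x)).add
      ((((hq₁ x).mul (hp₂ x)).add ((hq₂ x).mul (hp₁ x))).const_mul (γ₁ / 2))
  refine ⟨fun x => ?_, fun x => ?_, fun x => ?_⟩
  · rw [pbracket, (hX₁ x).fderiv, (hX₂ x).fderiv]
    simp [X₃]
    ring
  · rw [pbracket, (hX₃ x).fderiv, (hX₁ x).fderiv]
    simp [X₂, I₁, I₂]
    ring
  · rw [pbracket, (hX₂ x).fderiv, (hX₃ x).fderiv]
    simp [H₂, X₁]
    ring
end

section
/- Let κ > 0 and γ₁ ∈ ℝ, and set γ₂ = −κ. Let ρ, φ, p_ρ, p_φ ∈ ℝ with sin(√κ ρ) ≠ 0 and cos(√κ ρ) ≠ 0, and define S = sin(√κ ρ)/√κ, Cc = cos(√κ ρ), T = S/Cc. Under the substitution q₁ = S cos φ, q₂ = S sin φ, p₁ = (cos φ / Cc)(p_ρ − (γ₁/2)T) − (sin φ / S) p_φ, p₂ = (sin φ / Cc)(p_ρ − (γ₁/2)T) + (cos φ / S) p_φ, the Zernike Hamiltonian H₂ = p₁² + p₂² + γ₁(q₁p₁ + q₂p₂) + γ₂(q₁p₁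 + q₂p₂)² takes the natural form H₂ = p_ρ² + p_φ²/S² − (γ₁²/4)T². -/
/-!
With `w = p_ρ − (γ₁/2) T`, the point transformation gives `q · p = T w` and
`|p|² = w² / Cc² + p_φ² / S²`, because the radial and angular parts of `p` are orthogonal.
Since `κ S² + Cc² = 1`, it follows that `1 / Cc² − κ T² = 1`, so the quadratic term `−κ (q · p)²`
turns `w² / Cc²` into `w²`. Completing the square in `w² + γ₁ T w` yields
`p_ρ² − (γ₁²/4) T²`.
-/

/-- In geodesic polar coordinates on the sphere (curvature `κ = −γ₂ > 0`),
the Zernike Hamiltonian takes the natural form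
`H₂ = p_ρ² + p_φ²/S² − (γ₁²/4) T²`. -/
theorem zernike_geodesic_polar_natural_form (κ γ₁ : ℝ) (hκ : 0 < κ)
    (ρ φ pρ pφ : ℝ)
    (hsin : Real.sin (Real.sqrt κ * ρ) ≠ 0)
    (hcos : Real.cos (Real.sqrt κ * ρ) ≠ 0) :
    let γ₂ := -κ
    let S := Real.sin (Real.sqrt κ * ρ) / Real.sqrt κ
    let Cc := Real.cos (Real.sqrt κ * ρ)
    let T := S / Cc
    let q₁ := S * Real.cos φ
    let q₂ := S * Real.sin φ
    let p₁ := (Real.cos φ / Cc) * (pρ - (γ₁ / 2) * T) - (Real.sin φ / S) * pφ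
    let p₂ := (Real.sin φ / Cc) * (pρ - (γ₁ / 2) * T) + (Real.cos φ / S) * pφ
    p₁ ^ 2 + p₂ ^ 2 + γ₁ * (q₁ * p₁ + q₂ * p₂) + γ₂ * (q₁ * p₁ + q₂ * p₂) ^ 2
      = pρ ^ 2 + pφ ^ 2 / S ^ 2 - (γ₁ ^ 2 / 4) * T ^ 2 := by
  intro γ₂ S Cc T q₁ q₂ p₁ p₂
  have hC : Cc ≠ 0 := hcos
  have hT : T * Cc = S := div_mul_cancel₀ S hC
  have hφ : Real.sin φ ^ 2 + Real.cos φ ^ 2 = 1 := Real.sin_sq_add_cos_sq φ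
  have hκS : κ * S ^ 2 + Cc ^ 2 = 1 := by
    have h : κ * S ^ 2 = Real.sin (Real.sqrt κ * ρ) ^ 2 := by
      simp only [S, div_pow, Real.sq_sqrt hκ.le]
      field_simp
    rw [h]
    exact Real.sin_sq_add_cos_sq _
  have hp₁ : p₁ = (Real.cos φ / Cc) * (pρ - (γ₁ / 2) * T) - (Real.sin φ / S) * pφ := rfl
  have hp₂ : p₂ = (Real.sin φ / Cc) * (pρ - (γ₁ / 2) * T) + (Real.cos φ / S) * pφ := rfl
  have hq₁ : q₁ = S * Real.cos φ := rfl
  have hq₂ : q₂ = S * Real.sin φ := rfl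
  have hγ₂ : γ₂ = -κ := rfl
  clear_value γ₂ p₁ p₂ q₁ q₂ T S Cc
  -- `w` is the shifted radial momentum; the rest of the proof completes the square in it.
  obtain ⟨w, hw⟩ : ∃ w, w = pρ - (γ₁ / 2) * T := ⟨_, rfl⟩
  rw [← hw] at hp₁ hp₂
  have hdot : q₁ * p₁ + q₂ * p₂ = T * w := by
    have h : q₁ * p₁ + q₂ * p₂ =
        (Real.sin φ ^ 2 + Real.cos φ ^ 2) * (S / Cc * w) := by
      rw [hp₁, hp₂, hq₁, hq₂]; ring
    rw [h, hφ, one_mul, ← hT, mul_div_cancel_right₀ T hC]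
  have hnorm : p₁ ^ 2 + p₂ ^ 2 = w ^ 2 / Cc ^ 2 + pφ ^ 2 / S ^ 2 := by
    have h : p₁ ^ 2 + p₂ ^ 2 = (Real.sin φ ^ 2 + Real.cos φ ^ 2) *
        (w ^ 2 / Cc ^ 2 + pφ ^ 2 / S ^ 2) := by
      rw [hp₁, hp₂]; ring
    rw [h, hφ, one_mul]
  -- The Pythagorean identity `κ S² + Cc² = 1`, divided by `Cc²`.
  have hsec : w ^ 2 / Cc ^ 2 = w ^ 2 * (1 + κ * T ^ 2) := by
    rw [div_eq_iff (pow_ne_zero 2 hC)]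
    rw [← hT] at hκS
    linear_combination -w ^ 2 * hκS
  rw [hdot, hnorm, hsec, hγ₂, hw]
  ring
end

section
/- Fix γ₁, γ₂ ∈ ℝ and define on the open set D = {(q₁,q₂,p₁,p₂) ∈ ℝ⁴ : 1 + γ₂q₁² > 0} the functions Q₁ = q₁, Q₂ = q₂/√(1+γ₂q₁²), P₁ = p₁ + γ₂q₁q₂p₂/(1+γ₂q₁²), P₂ = p₂√(1+γ₂q₁²). Then at every point of D the canonical Poisson bracket relations {Q₁,Q₂} = 0, {P₁,P₂} = 0, {Q₁,P₁} = 1, {Q₂,P₂} = 1, {Q₁,P₂} = 0, {Q₂,P₁} = 0 hold; i.e., (Q₁,Q₂,P₁,P₂) is a canonical (Darboux) coordinate system on D. -/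
namespace ZernikeDH

/-- `d√(1 + γ q₁²) = (γ q₁ / √(1 + γ q₁²)) dq₁`. -/
lemma hasFDerivAt_sqrt (γ : ℝ) (x : ℝ × ℝ × ℝ × ℝ) (hx : 0 < 1 + γ * x.1 ^ 2) :
    HasFDerivAt (fun y : ℝ × ℝ × ℝ × ℝ => Real.sqrt (1 + γ * y.1 ^ 2))
      ((γ * x.1 / Real.sqrt (1 + γ * x.1 ^ 2)) • ContinuousLinearMap.fst ℝ ℝ (ℝ × ℝ × ℝ)) x := by
  have h1 : HasDerivAt (fun t : ℝ => Real.sqrt (1 + γ * t ^ 2))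
      (γ * x.1 / Real.sqrt (1 + γ * x.1 ^ 2)) x.1 := by
    have h := ((((hasDerivAt_id' x.1).fun_pow 2).const_mul γ).const_add 1).sqrt hx.ne'
    convert h using 1
    have := (Real.sqrt_pos.2 hx).ne'
    simp
    field_simp
  exact h1.comp_hasFDerivAt x hasFDerivAt_fst

lemma hasFDerivAt_div {f g : ℝ × ℝ × ℝ × ℝ → ℝ} {f' g' : ℝ × ℝ × ℝ × ℝ →L[ℝ] ℝ}
    {x : ℝ × ℝ × ℝ × ℝ} (hf : HasFDerivAt f f' x) (hg : HasFDerivAt g g' x) (h0 : g x ≠ 0) :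
    HasFDerivAt (fun y => f y / g y) ((g x)⁻¹ • f' - (f x / g x ^ 2) • g') x := by
  have h := hf.fun_mul ((hasDerivAt_inv h0).comp_hasFDerivAt x hg)
  simp only [div_eq_mul_inv]
  refine h.congr_fderiv (ContinuousLinearMap.ext fun v => ?_)
  simp
  ring

lemma fderiv_Q₂ (γ : ℝ) (x v : ℝ × ℝ × ℝ × ℝ) (hx : 0 < 1 + γ * x.1 ^ 2) :
    fderiv ℝ (fun y : ℝ × ℝ × ℝ × ℝ => y.2.1 / Real.sqrt (1 + γ * y.1 ^ 2)) x v =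
      v.2.1 / Real.sqrt (1 + γ * x.1 ^ 2)
        - x.2.1 * γ * x.1 * v.1 / Real.sqrt (1 + γ * x.1 ^ 2) ^ 3 := by
  have hs := (Real.sqrt_pos.2 hx).ne'
  have hq : HasFDerivAt (fun y : ℝ × ℝ × ℝ × ℝ => y.2.1) _ x :=
    (hasFDerivAt_snd (𝕜 := ℝ)).fst
  have h := hasFDerivAt_div hq (hasFDerivAt_sqrt γ x hx) hs
  rw [h.fderiv]
  simp
  field_simp

lemma fderiv_P₂ (γ : ℝ) (x v : ℝ × ℝ × ℝ × ℝ) (hx : 0 < 1 + γ * x.1 ^ 2) :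
    fderiv ℝ (fun y : ℝ × ℝ × ℝ × ℝ => y.2.2.2 * Real.sqrt (1 + γ * y.1 ^ 2)) x v =
      v.2.2.2 * Real.sqrt (1 + γ * x.1 ^ 2)
        + x.2.2.2 * γ * x.1 * v.1 / Real.sqrt (1 + γ * x.1 ^ 2) := by
  have hp : HasFDerivAt (fun y : ℝ × ℝ × ℝ × ℝ => y.2.2.2) _ x :=
    (ContinuousLinearMap.snd ℝ ℝ ℝ ∘L ContinuousLinearMap.snd ℝ ℝ (ℝ × ℝ) ∘L
      ContinuousLinearMap.snd ℝ ℝ (ℝ × ℝ × ℝ)).hasFDerivAt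
  rw [(hp.fun_mul (hasFDerivAt_sqrt γ x hx)).fderiv]
  simp
  ring

lemma fderiv_P₁ (γ : ℝ) (x v : ℝ × ℝ × ℝ × ℝ) (hx : 0 < 1 + γ * x.1 ^ 2) :
    fderiv ℝ (fun y : ℝ × ℝ × ℝ × ℝ =>
        y.2.2.1 + γ * y.1 * y.2.1 * y.2.2.2 / (1 + γ * y.1 ^ 2)) x v =
      v.2.2.1 + γ * (v.1 * x.2.1 * x.2.2.2 + x.1 * v.2.1 * x.2.2.2 + x.1 * x.2.1 * v.2.2.2)
          / (1 + γ * x.1 ^ 2)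
        - 2 * γ ^ 2 * x.1 ^ 2 * x.2.1 * x.2.2.2 * v.1 / (1 + γ * x.1 ^ 2) ^ 2 := by
  have hq₁ : HasFDerivAt (fun y : ℝ × ℝ × ℝ × ℝ => y.1) _ x := hasFDerivAt_fst (𝕜 := ℝ)
  have hq₂ : HasFDerivAt (fun y : ℝ × ℝ × ℝ × ℝ => y.2.1) _ x :=
    (hasFDerivAt_snd (𝕜 := ℝ)).fst
  have hp₁ : HasFDerivAt (fun y : ℝ × ℝ × ℝ × ℝ => y.2.2.1) _ x :=
    (ContinuousLinearMap.fst ℝ ℝ ℝ ∘L ContinuousLinearMap.snd ℝ ℝ (ℝ × ℝ) ∘L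
      ContinuousLinearMap.snd ℝ ℝ (ℝ × ℝ × ℝ)).hasFDerivAt
  have hp₂ : HasFDerivAt (fun y : ℝ × ℝ × ℝ × ℝ => y.2.2.2) _ x :=
    (ContinuousLinearMap.snd ℝ ℝ ℝ ∘L ContinuousLinearMap.snd ℝ ℝ (ℝ × ℝ) ∘L
      ContinuousLinearMap.snd ℝ ℝ (ℝ × ℝ × ℝ)).hasFDerivAt
  have hw : HasFDerivAt (fun y : ℝ × ℝ × ℝ × ℝ => 1 + γ * y.1 ^ 2) _ x :=
    ((((hasDerivAt_id' x.1).fun_pow 2).const_mul γ).const_add 1).comp_hasFDerivAt x hq₁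
  have h := hp₁.fun_add (hasFDerivAt_div (((hq₁.const_mul γ).fun_mul hq₂).fun_mul hp₂) hw hx.ne')
  rw [h.fderiv]
  have := hx.ne'
  simp
  field_simp
  ring

end ZernikeDH

/-- The Darboux–Haantjes coordinates adapted to `I₂` form a canonical
(Darboux) coordinate system on the open set `{1 + γ₂q₁² > 0}`. -/
theorem zernike_DH_coordinates_canonical (γ₁ γ₂ : ℝ) :
    let Q₁ : ℝ × ℝ × ℝ × ℝ → ℝ := fun y => y.1
    let Q₂ : ℝ × ℝ × ℝ × ℝ → ℝ := fun y =>
      y.2.1 / Real.sqrt (1 + γ₂ * y.1 ^ 2)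
    let P₁ : ℝ × ℝ × ℝ × ℝ → ℝ := fun y =>
      y.2.2.1 + γ₂ * y.1 * y.2.1 * y.2.2.2 / (1 + γ₂ * y.1 ^ 2)
    let P₂ : ℝ × ℝ × ℝ × ℝ → ℝ := fun y =>
      y.2.2.2 * Real.sqrt (1 + γ₂ * y.1 ^ 2)
    ∀ x : ℝ × ℝ × ℝ × ℝ, 0 < 1 + γ₂ * x.1 ^ 2 →
      pbracket Q₁ Q₂ x = 0 ∧ pbracket P₁ P₂ x = 0 ∧
      pbracket Q₁ P₁ x = 1 ∧ pbracket Q₂ P₂ x = 1 ∧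
      pbracket Q₁ P₂ x = 0 ∧ pbracket Q₂ P₁ x = 0 := by
  intro Q₁ Q₂ P₁ P₂ x hx
  have hs := (Real.sqrt_pos.2 hx).ne'
  have hw := Real.sq_sqrt hx.le
  have dQ₁ (v : ℝ × ℝ × ℝ × ℝ) : fderiv ℝ Q₁ x v = v.1 := by
    rw [(hasFDerivAt_fst (𝕜 := ℝ) : HasFDerivAt Q₁ _ x).fderiv]
    rfl
  have dQ₂ (v : ℝ × ℝ × ℝ × ℝ) := ZernikeDH.fderiv_Q₂ γ₂ x v hx
  have dP₁ (v : ℝ × ℝ × ℝ × ℝ) := ZernikeDH.fderiv_P₁ γ₂ x v hx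
  have dP₂ (v : ℝ × ℝ × ℝ × ℝ) := ZernikeDH.fderiv_P₂ γ₂ x v hx
  -- Replacing `w` by `s²` outside the root leaves identities between rational functions of `s`.
  set s := Real.sqrt (1 + γ₂ * x.1 ^ 2) with hs_def
  simp only [← hw] at dP₁
  refine ⟨?_, ?_, ?_, ?_, ?_, ?_⟩ <;>
    simp only [pbracket, dQ₁, Q₂, P₁, P₂, dQ₂, dP₁, dP₂] <;> field_simp <;> ring
end

section
/- Fix γ₁, γ₂ ∈ ℝ and let (q₁,q₂,p₁,p₂) ∈ ℝ⁴ with 1 + γ₂q₁² > 0. Set Q₁ = q₁, Q₂ = q₂/√(1+γ₂q₁²), P₁ = p₁ + γ₂q₁q₂p₂/(1+γ₂q₁²), P₂ = p₂√(1+γ₂q₁²). Then the Zernike Hamiltonian H₂ = p₁² + p₂² + γ₁(q₁p₁+q₂p₂) + γ₂(q₁p₁+q₂p₂)² and the integral I₂ = (1+γ₂(q₁²+q₂²))p₂² + γ₁q₂p₂ take the separated forms H₂ = P₁² + γ₁Q₁P₁ + γ₂(Q₁P₁)² + (P₂² + γ₁Q₂P₂ + γ₂(Q₂P₂)²)/(1+γ₂Q₁²)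 and I₂ = P₂² + γ₁Q₂P₂ + γ₂(Q₂P₂)². -/
/-!
Write `D = 1 + γ₂ q₁²`. Since `P₂² = p₂² D` and `Q₂ P₂ = q₂ p₂`, the square roots disappear, and the
form of `I₂` is immediate. For `H₂`, completing the square in `p₁` gives
`D P₁² = D p₁² + 2 γ₂ q₁ q₂ p₁ p₂ + γ₂² q₁² q₂² p₂² / D`, and the remainder, together with the
`γ₁` terms, is accounted for by `I₂ / D`: a rational identity with denominator `D ≠ 0`.
-/

/-- In the Darboux–Haantjes coordinates adapted to `I₂`, the Zernike
Hamiltonian and the integral `I₂` take separated form. -/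
theorem zernike_separated_form_I2 (γ₁ γ₂ : ℝ) (q₁ q₂ p₁ p₂ : ℝ)
    (h : 0 < 1 + γ₂ * q₁ ^ 2) :
    let Q₁ := q₁
    let Q₂ := q₂ / Real.sqrt (1 + γ₂ * q₁ ^ 2)
    let P₁ := p₁ + γ₂ * q₁ * q₂ * p₂ / (1 + γ₂ * q₁ ^ 2)
    let P₂ := p₂ * Real.sqrt (1 + γ₂ * q₁ ^ 2)
    (p₁ ^ 2 + p₂ ^ 2 + γ₁ * (q₁ * p₁ + q₂ * p₂)
        + γ₂ * (q₁ * p₁ + q₂ * p₂) ^ 2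
      = P₁ ^ 2 + γ₁ * Q₁ * P₁ + γ₂ * (Q₁ * P₁) ^ 2
        + (P₂ ^ 2 + γ₁ * Q₂ * P₂ + γ₂ * (Q₂ * P₂) ^ 2) / (1 + γ₂ * Q₁ ^ 2)) ∧
    ((1 + γ₂ * (q₁ ^ 2 + q₂ ^ 2)) * p₂ ^ 2 + γ₁ * q₂ * p₂
      = P₂ ^ 2 + γ₁ * Q₂ * P₂ + γ₂ * (Q₂ * P₂) ^ 2) := by
  intro Q₁ Q₂ P₁ P₂
  have hD : 1 + γ₂ * q₁ ^ 2 ≠ 0 := ne_of_gt h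
  -- The square root enters only through `P₂ ^ 2` and `Q₂ * P₂`, where it cancels.
  have hP : P₂ ^ 2 = p₂ ^ 2 * (1 + γ₂ * q₁ ^ 2) := by
    simp only [P₂, mul_pow, Real.sq_sqrt h.le]
  have hQP : Q₂ * P₂ = q₂ * p₂ := by
    have hs : Real.sqrt (1 + γ₂ * q₁ ^ 2) ≠ 0 := (Real.sqrt_pos.mpr h).ne'
    simp only [Q₂, P₂]
    field_simp
  rw [mul_assoc γ₁ Q₂ P₂, hQP, hP]
  constructor
  · -- `field_simp` reorders the factors of the denominator to this form.
    have hD₂ : 1 + q₁ ^ 2 * γ₂ ≠ 0 := by rwa [mul_comm] at hD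
    simp only [P₁, Q₁]
    field_simp
    ring
  · ring
end

section
/- Fix γ₁, γ₂ ∈ ℝ and let (q₁,q₂,p₁,p₂) ∈ ℝ⁴ with 1 + γ₂q₂² > 0. Set Q₁ = q₁/√(1+γ₂q₂²), Q₂ = q₂, P₁ = p₁√(1+γ₂q₂²), P₂ = p₂ + γ₂q₁q₂p₁/(1+γ₂q₂²). Then the integral I₁ = (1+γ₂(q₁²+q₂²))p₁² + γ₁q₁p₁ takes the separated form I₁ = P₁² + γ₁Q₁P₁ + γ₂(Q₁P₁)², and the Zernike Hamiltonian H₂ = p₁² + p₂² + γ₁(q₁p₁+q₂p₂) + γ₂(q₁p₁+q₂p₂)² takes the separated form H₂ = (P₁² + γ₁Q₁P₁ + γ₂(Q₁P₁)²)/(1+γ₂Q₂²) + P₂² + γ₁Q₂P₂ + γ₂(Q₂P₂)². -/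
/-- In the Darboux–Haantjes coordinates adapted to `I₁`, the integral `I₁`
and the Zernike Hamiltonian take separated form. -/
theorem zernike_separated_form_I1 (γ₁ γ₂ : ℝ) (q₁ q₂ p₁ p₂ : ℝ)
    (h : 0 < 1 + γ₂ * q₂ ^ 2) :
    let Q₁ := q₁ / Real.sqrt (1 + γ₂ * q₂ ^ 2)
    let Q₂ := q₂
    let P₁ := p₁ * Real.sqrt (1 + γ₂ * q₂ ^ 2)
    let P₂ := p₂ + γ₂ * q₁ * q₂ * p₁ / (1 + γ₂ * q₂ ^ 2)
    ((1 + γ₂ * (q₁ ^ 2 + q₂ ^ 2)) * p₁ ^ 2 + γ₁ * q₁ * p₁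
      = P₁ ^ 2 + γ₁ * Q₁ * P₁ + γ₂ * (Q₁ * P₁) ^ 2) ∧
    (p₁ ^ 2 + p₂ ^ 2 + γ₁ * (q₁ * p₁ + q₂ * p₂)
        + γ₂ * (q₁ * p₁ + q₂ * p₂) ^ 2
      = (P₁ ^ 2 + γ₁ * Q₁ * P₁ + γ₂ * (Q₁ * P₁) ^ 2) / (1 + γ₂ * Q₂ ^ 2)
        + P₂ ^ 2 + γ₁ * Q₂ * P₂ + γ₂ * (Q₂ * P₂) ^ 2) := by
  intro Q₁ Q₂ P₁ P₂
  have hD : 1 + γ₂ * q₂ ^ 2 ≠ 0 := ne_of_gt h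
  have hs : Real.sqrt (1 + γ₂ * q₂ ^ 2) ≠ 0 := ne_of_gt (Real.sqrt_pos.mpr h)
  -- The square root enters only through `P₁ ^ 2` and `Q₁ * P₁`, where it disappears.
  have hP : P₁ ^ 2 = p₁ ^ 2 * (1 + γ₂ * q₂ ^ 2) := by
    simp only [P₁]
    rw [mul_pow, Real.sq_sqrt h.le]
  have hQP : Q₁ * P₁ = q₁ * p₁ := by
    simp only [Q₁, P₁]
    field_simp
  rw [mul_assoc γ₁ Q₁ P₁, hP, hQP]
  simp only [Q₂, P₂]
  constructor
  · ring
  · clear_value Q₁ P₁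
    generalize hDe : 1 + γ₂ * q₂ ^ 2 = D at hD ⊢
    field_simp
    rw [← hDe]
    ring
end

section
/- Let γ₂ ∈ ℝ (of either sign) and let f ∈ (0, π/2), with k₁ = cos f and k₂ = sin f. For all q₁, q₂ ∈ ℝ, setting T = γ₂(q₁² + k₁²q₂²) + k₂² and P = γ₂k₁²k₂²q₂², one has T² − 4P ≥ 0; in particular the eigenvalues (T ± √(T²−4P))/2 of the elliptic Darboux–Haantjes coordinate map are real on all of ℝ². -/
/-- The discriminant `T² − 4P` of the elliptic Darboux–Haantjes coordinate map
is nonnegative on all of `ℝ²`, for either sign of `γ₂`; in particular the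
eigenvalues `(T ± √(T²−4P))/2` are real. -/
theorem zernike_elliptic_discriminant_nonneg
    (γ₂ : ℝ) (f : ℝ) (hf : f ∈ Set.Ioo 0 (Real.pi / 2)) (q₁ q₂ : ℝ) :
    let k₁ := Real.cos f
    let k₂ := Real.sin f
    let T := γ₂ * (q₁ ^ 2 + k₁ ^ 2 * q₂ ^ 2) + k₂ ^ 2
    let P := γ₂ * k₁ ^ 2 * k₂ ^ 2 * q₂ ^ 2
    0 ≤ T ^ 2 - 4 * P := by
  intro k₁ k₂ T P
  rcases le_total 0 γ₂ with hγ | hγ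
  · -- Completing the square isolates the term `4 γ₂ k₂² q₁²`, whose sign is that of `γ₂`.
    have hsq : T ^ 2 - 4 * P =
        (γ₂ * (q₁ ^ 2 + k₁ ^ 2 * q₂ ^ 2) - k₂ ^ 2) ^ 2 + 4 * (γ₂ * (k₂ * q₁) ^ 2) := by
      simp only [T, P]
      ring
    rw [hsq]
    positivity
  · -- For `γ₂ ≤ 0` the determinant `P` is itself nonpositive.
    have hP : P = γ₂ * (k₁ * k₂ * q₂) ^ 2 := by
      simp only [P]
      ring
    have hP0 : P ≤ 0 := hP ▸ mul_nonpos_of_nonpos_of_nonneg hγ (sq_nonneg _)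
    linarith [sq_nonneg T]
end
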